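/- arXiv:hep-th/9511111 — 5 statements merged into one kernel-verified Lean document; each statement's English description precedes it below -/
import Mathlib

section
/- Let D ≥ 2 and suppose the pair of polynomial vector fields (P, P̄) satisfies the system (S): ∂_μ P_ν = ∂_ν P̄_μ for all μ, ν, and Σ_μ ∂^μ P_μ = Σ_μ ∂^μ P̄_μ. If every component P_μ and P̄_μ is homogeneous of degree n with n > 1, then the solution is trivial: there exists a polynomial R (homogeneous of degree n+1) such that P_μ = P̄_μ = ∂_μ R for all μ. -/
open MvPolynomial

/-- The partial derivative `∂_μ` on `ℂ[x^0, …, x^{D-1}]`, as a linear map. -/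
noncomputable def pd (D : ℕ) (μ : Fin D) :
    MvPolynomial (Fin D) ℂ →ₗ[ℂ] MvPolynomial (Fin D) ℂ :=
  (pderiv μ).toLinearMap

/-- The raised-index derivative `∂^μ = η^{μμ} ∂_μ` for the Minkowski metric
`η = diag(-1, 1, …, 1)` (no sum over `μ`). -/
noncomputable def pdU (D : ℕ) (μ : Fin D) :
    MvPolynomial (Fin D) ℂ →ₗ[ℂ] MvPolynomial (Fin D) ℂ :=
  (if (μ : ℕ) = 0 then (-1 : ℂ) else 1) • pd D μ

open MvPolynomial in
lemma eq_zero_of_pd (D m : ℕ) (hm : m ≠ 0) (f : MvPolynomial (Fin D) ℂ)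
    (hf : f.IsHomogeneous m) (h : ∀ μ, pderiv μ f = 0) : f = 0 := by
  have e := hf.sum_X_mul_pderiv
  simp only [h, mul_zero, Finset.sum_const_zero] at e
  rcases smul_eq_zero.mp e.symm with h | h
  · exact absurd h hm
  · exact h

open MvPolynomial in
lemma pd_comm (D : ℕ) (μ ν : Fin D) (f : MvPolynomial (Fin D) ℂ) :
    pderiv μ (pderiv ν f) = pderiv ν (pderiv μ f) := by
  have h : ⁅(pderiv μ : Derivation ℂ (MvPolynomial (Fin D) ℂ) (MvPolynomial (Fin D) ℂ)),
      (pderiv ν : Derivation ℂ (MvPolynomial (Fin D) ℂ) (MvPolynomial (Fin D) ℂ))⁆ = 0 := by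
    apply MvPolynomial.derivation_ext
    intro i
    simp only [Derivation.commutator_apply, pderiv_X, Pi.single_apply]
    split_ifs <;> simp
  have := congrArg (fun d => d f) h
  simpa [Derivation.commutator_apply, sub_eq_zero] using this

/-- Lemma 1 of the paper (triviality part): for `D ≥ 2`, any solution `(P, P̄)` of the system
`∂_μ P_ν = ∂_ν P̄_μ`, `Σ_μ ∂^μ P_μ = Σ_μ ∂^μ P̄_μ` whose components are homogeneous of degree
`n > 1` is trivial: `P_μ = P̄_μ = ∂_μ R` for a homogeneous polynomial `R` of degree `n + 1`. -/
theorem homogeneous_solutions_trivial_for_degree_gt_one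
    (D : ℕ) (hD : 2 ≤ D) (n : ℕ) (hn : 1 < n)
    (P Pb : Fin D → MvPolynomial (Fin D) ℂ)
    (hhomP : ∀ μ, (P μ).IsHomogeneous n)
    (hhomPb : ∀ μ, (Pb μ).IsHomogeneous n)
    (hS1 : ∀ μ ν, pd D μ (P ν) = pd D ν (Pb μ))
    (hS2 : (∑ μ, pdU D μ (P μ)) = ∑ μ, pdU D μ (Pb μ)) :
    ∃ R : MvPolynomial (Fin D) ℂ, R.IsHomogeneous (n + 1) ∧
      ∀ μ, P μ = pd D μ R ∧ Pb μ = pd D μ R := by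
  have h1 : ∀ μ ν, pderiv μ (P ν) = pderiv ν (Pb μ) := hS1
  have hn1 : n - 1 ≠ 0 := by omega
  have cP : ∀ μ ν, pderiv μ (P ν) = pderiv ν (P μ) := by
    intro μ ν
    rw [← sub_eq_zero]
    apply eq_zero_of_pd D (n - 1) hn1
    · exact ((hhomP ν).pderiv).sub ((hhomP μ).pderiv)
    · intro l
      rw [map_sub, pd_comm D l μ, pd_comm D l ν, h1, h1, pd_comm, sub_self]
  have hPP : ∀ μ, Pb μ = P μ := by
    intro μ
    rw [← sub_eq_zero]
    apply eq_zero_of_pd D n (by omega)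
    · exact (hhomPb μ).sub (hhomP μ)
    · intro l
      rw [map_sub, ← h1, cP, sub_self]
  have hc : ((n : ℂ) + 1) ≠ 0 := by exact_mod_cast Nat.succ_ne_zero n
  have key : ∀ μ, P μ = pd D μ (((n : ℂ) + 1)⁻¹ • ∑ ν, X ν * P ν) := by
    intro μ
    have e := (hhomP μ).sum_X_mul_pderiv
    have h2 : pderiv μ (∑ ν, X ν * P ν) = ((n : ℂ) + 1) • P μ := by
      rw [map_sum]
      simp only [Derivation.leibniz, smul_eq_mul, pderiv_X, Finset.sum_add_distrib, cP μ, e]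
      simp [Pi.single_apply, add_smul, Nat.cast_smul_eq_nsmul]
    rw [map_smul]
    change _ = _ • pderiv μ _
    rw [h2, smul_smul, inv_mul_cancel₀ hc, one_smul]
  refine ⟨((n : ℂ) + 1)⁻¹ • ∑ ν, X ν * P ν, ?_, fun μ => ⟨key μ, (hPP μ).trans (key μ)⟩⟩
  rw [MvPolynomial.smul_eq_C_mul, ← zero_add (n + 1)]
  refine (isHomogeneous_C _ _).mul (IsHomogeneous.sum _ _ _ fun ν _ => ?_)
  rw [add_comm]
  exact (isHomogeneous_X _ _).mul (hhomP ν)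
end

section
/- Let D ≥ 2. Let S be the ℂ-vector space of all pairs (P, P̄) of polynomial vector fields satisfying the system (S): ∂_μ P_ν = ∂_ν P̄_μ for all μ, ν and Σ_μ ∂^μ P_μ = Σ_μ ∂^μ P̄_μ, and let T ⊆ S be the subspace of trivial solutions {(∇R, ∇R) : R a polynomial}, where (∇R)_μ = ∂_μ R. Then the quotient space S/T is finite dimensional of dimension D(D+1)/2, and every class in S/T has a representative (P, P̄) all of whose components are polynomials of total degree at most one. -/
open MvPolynomial

/-- Pairs `(P, P̄)` of polynomial vector fields on `ℝ^{D-1,1}`. -/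
abbrev PairVF (D : ℕ) :=
  (Fin D → MvPolynomial (Fin D) ℂ) × (Fin D → MvPolynomial (Fin D) ℂ)

/-- The space `S` of solutions `(P, P̄)` of the system (S):
`∂_μ P_ν = ∂_ν P̄_μ` for all `μ, ν`, and `Σ_μ ∂^μ P_μ = Σ_μ ∂^μ P̄_μ`. -/
noncomputable def solS (D : ℕ) : Submodule ℂ (PairVF D) where
  carrier := {p | (∀ μ ν, pd D μ (p.1 ν) = pd D ν (p.2 μ)) ∧
    (∑ μ, pdU D μ (p.1 μ)) = ∑ μ, pdU D μ (p.2 μ)}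
  add_mem' := by
    rintro a b ⟨ha1, ha2⟩ ⟨hb1, hb2⟩
    refine ⟨fun μ ν => ?_, ?_⟩
    · simp only [Prod.fst_add, Prod.snd_add, Pi.add_apply, map_add, ha1 μ ν, hb1 μ ν]
    · simp only [Prod.fst_add, Prod.snd_add, Pi.add_apply, map_add,
        Finset.sum_add_distrib, ha2, hb2]
  zero_mem' := by
    refine ⟨fun μ ν => ?_, ?_⟩ <;> simp
  smul_mem' := by
    rintro c a ⟨ha1, ha2⟩
    refine ⟨fun μ ν => ?_, ?_⟩
    · simp only [Prod.smul_fst, Prod.smul_snd, Pi.smul_apply, map_smul, ha1 μ ν]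
    · simp only [Prod.smul_fst, Prod.smul_snd, Pi.smul_apply, map_smul,
        ← Finset.smul_sum, ha2]

/-- The gradient `R ↦ (∂_μ R)_μ` as a linear map. -/
noncomputable def grad (D : ℕ) :
    MvPolynomial (Fin D) ℂ →ₗ[ℂ] (Fin D → MvPolynomial (Fin D) ℂ) :=
  LinearMap.pi fun μ => pd D μ

/-- The map `R ↦ (∇R, ∇R)`. -/
noncomputable def gradPair (D : ℕ) : MvPolynomial (Fin D) ℂ →ₗ[ℂ] PairVF D :=
  (grad D).prod (grad D)

/-- The space `T` of trivial solutions `(∇R, ∇R)`. -/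
noncomputable def trivT (D : ℕ) : Submodule ℂ (PairVF D) :=
  LinearMap.range (gradPair D)

/-! ### Helper lemmas -/

lemma pd_comm' (D : ℕ) (i j : Fin D) (p : MvPolynomial (Fin D) ℂ) :
    pderiv i (pderiv j p) = pderiv j (pderiv i p) := by
  ext m
  simp only [coeff_pderiv]
  rw [add_right_comm]
  by_cases h : i = j
  · subst h; rfl
  · have h1 : (m + Finsupp.single i 1 : Fin D →₀ ℕ) j = m j := by simp [h]
    have h2 : (m + Finsupp.single j 1 : Fin D →₀ ℕ) i = m i := by simp [Ne.symm h]
    rw [h1, h2]; ring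

lemma eq_C_of_pderiv (D : ℕ) (p : MvPolynomial (Fin D) ℂ) (h : ∀ i, pderiv i p = 0) :
    p = C (coeff 0 p) := by
  ext m
  rw [coeff_C]
  split_ifs with hm
  · rw [hm]
  · obtain ⟨i, hi⟩ : ∃ i, m i ≠ 0 := by
      by_contra hc
      push Not at hc
      exact hm (Finsupp.ext fun i => (hc i).symm)
    have := congrArg (coeff (m - Finsupp.single i 1)) (h i)
    rw [coeff_pderiv, Finsupp.sub_add_single_one_cancel hi, coeff_zero] at this
    rcases mul_eq_zero.1 this with h0 | h0
    · exact h0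
    · exact absurd h0 (Nat.cast_add_one_ne_zero _)

lemma pderiv_hc (D n : ℕ) (i : Fin D) (p : MvPolynomial (Fin D) ℂ) :
    pderiv i (homogeneousComponent (n + 1) p) = homogeneousComponent n (pderiv i p) := by
  ext m
  rw [coeff_pderiv, coeff_homogeneousComponent, coeff_homogeneousComponent, coeff_pderiv]
  have : (m + Finsupp.single i 1).degree = m.degree + 1 := by simp
  rw [this]
  by_cases h : m.degree = n <;> simp [h]

lemma hc_sum (D N : ℕ) (p : MvPolynomial (Fin D) ℂ) (h : p.totalDegree < N) :
    ∑ n ∈ Finset.range N, homogeneousComponent n p = p := by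
  conv_rhs => rw [← sum_homogeneousComponent p]
  symm
  apply Finset.sum_subset
  · intro x hx
    simp only [Finset.mem_range] at *
    omega
  · intro x _ hx
    apply homogeneousComponent_eq_zero
    simp only [Finset.mem_range] at *
    omega

lemma poincare_hom (D n : ℕ) (P : Fin D → MvPolynomial (Fin D) ℂ)
    (hP : ∀ i, (P i).IsHomogeneous n)
    (h : ∀ i j, pderiv i (P j) = pderiv j (P i)) (i : Fin D) :
    pderiv i (((n : ℂ) + 1)⁻¹ • ∑ j, X j * P j) = P i := by
  classical
  rw [Derivation.map_smul, map_sum]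
  simp only [pderiv_mul, pderiv_X, Finset.sum_add_distrib]
  simp_rw [h i, (hP i).sum_X_mul_pderiv]
  have : ∑ x, (Pi.single i 1 : Fin D → MvPolynomial (Fin D) ℂ) x * P x = P i := by
    simp [Pi.single_apply]
  rw [this]
  have h2 : P i + n • P i = ((n : ℂ) + 1) • P i := by
    rw [add_smul, one_smul, add_comm, Nat.cast_smul_eq_nsmul]
  rw [h2, smul_smul, inv_mul_cancel₀ (Nat.cast_add_one_ne_zero n), one_smul]

lemma poincare (D : ℕ) (P : Fin D → MvPolynomial (Fin D) ℂ)
    (h : ∀ i j, pderiv i (P j) = pderiv j (P i)) :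
    ∃ R : MvPolynomial (Fin D) ℂ, ∀ i, pderiv i R = P i := by
  let N := (Finset.univ.sup fun i => (P i).totalDegree) + 1
  have hN : ∀ i, (P i).totalDegree < N := fun i =>
    Nat.lt_succ_of_le (Finset.le_sup (f := fun i => (P i).totalDegree) (Finset.mem_univ i))
  refine ⟨∑ n ∈ Finset.range N,
    ((n : ℂ) + 1)⁻¹ • ∑ j, X j * homogeneousComponent n (P j), fun i => ?_⟩
  rw [map_sum]
  conv_rhs => rw [← hc_sum D N (P i) (hN i)]
  refine Finset.sum_congr rfl fun n _ => ?_
  refine poincare_hom D n (fun j => homogeneousComponent n (P j))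
    (fun j => homogeneousComponent_isHomogeneous n (P j)) (fun a b => ?_) i
  rcases n with _ | n
  · simp [homogeneousComponent_zero]
  · rw [pderiv_hc, pderiv_hc, h]

/-- Index set of pairs `i < j`. -/
abbrev PairIdx (D : ℕ) := Σ j : Fin D, Fin (j : ℕ)

/-- The smaller index. -/
def lowIdx {D : ℕ} (s : PairIdx D) : Fin D := ⟨s.2, s.2.2.trans s.1.2⟩

/-- The invariants: curl at the origin and difference at the origin. -/
noncomputable def invMap (D : ℕ) : PairVF D →ₗ[ℂ] (PairIdx D → ℂ) × (Fin D → ℂ) where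
  toFun p := (fun s => coeff 0 (pderiv (lowIdx s) (p.1 s.1) - pderiv s.1 (p.1 (lowIdx s))),
    fun μ => coeff 0 (p.1 μ - p.2 μ))
  map_add' p q := by
    ext <;> simp <;> ring
  map_smul' c p := by
    ext <;> simp <;> ring

/-- The skew matrix with given entries above the diagonal. -/
noncomputable def skewOf {D : ℕ} (f : PairIdx D → ℂ) (i j : Fin D) : ℂ :=
  if h : i < j then f ⟨j, ⟨i, h⟩⟩ / 2 else if h : j < i then - f ⟨i, ⟨j, h⟩⟩ / 2 else 0

lemma skewOf_skew {D : ℕ} (f : PairIdx D → ℂ) (i j : Fin D) : skewOf f i j = - skewOf f j i := by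
  unfold skewOf
  rcases lt_trichotomy i j with h | h | h
  · simp [h, h.not_gt]; ring
  · subst h; simp
  · simp [h, h.not_gt]; ring

/-- The linear part. -/
noncomputable def linP {D : ℕ} (f : PairIdx D → ℂ) (j : Fin D) : MvPolynomial (Fin D) ℂ :=
  ∑ i, C (skewOf f i j) * X i

lemma pderiv_linP {D : ℕ} (f : PairIdx D → ℂ) (i j : Fin D) :
    pderiv i (linP f j) = C (skewOf f i j) := by
  classical
  simp [linP, pderiv_C_mul, Pi.single_apply]

lemma linP_degree {D : ℕ} (f : PairIdx D → ℂ) (j : Fin D) : (linP f j).totalDegree ≤ 1 := by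
  apply totalDegree_finsetSum_le
  intro i _
  exact (isHomogeneous_C_mul_X _ _).totalDegree_le

/-- The low degree solution with given invariants. -/
noncomputable def secMap {D : ℕ} (y : (PairIdx D → ℂ) × (Fin D → ℂ)) : PairVF D :=
  (linP y.1, fun μ => - linP y.1 μ - C (y.2 μ))

lemma secMap_mem {D : ℕ} (y : (PairIdx D → ℂ) × (Fin D → ℂ)) : secMap y ∈ solS D := by
  refine ⟨fun μ ν => ?_, ?_⟩
  · show pderiv μ (linP y.1 ν) = pderiv ν (- linP y.1 μ - C (y.2 μ))
    rw [map_sub, map_neg, pderiv_linP, pderiv_linP, pderiv_C, skewOf_skew]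
    simp
  · refine Finset.sum_congr rfl fun μ _ => ?_
    have h0 : skewOf y.1 μ μ = 0 := by simp [skewOf]
    show (if (μ : ℕ) = 0 then (-1 : ℂ) else 1) • pderiv μ (linP y.1 μ) =
      (if (μ : ℕ) = 0 then (-1 : ℂ) else 1) • pderiv μ (- linP y.1 μ - C (y.2 μ))
    rw [map_sub, map_neg, pderiv_linP, pderiv_C, h0]
    simp

lemma inv_secMap {D : ℕ} (y : (PairIdx D → ℂ) × (Fin D → ℂ)) : invMap D (secMap y) = y := by
  refine Prod.ext (funext fun s => ?_) (funext fun μ => ?_)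
  · show coeff 0 (pderiv (lowIdx s) (linP y.1 s.1) - pderiv s.1 (linP y.1 (lowIdx s))) = y.1 s
    have hlt : lowIdx s < s.1 := s.2.2
    rw [pderiv_linP, pderiv_linP, skewOf_skew y.1 s.1, skewOf, dif_pos hlt]
    have : (⟨s.1, ⟨lowIdx s, hlt⟩⟩ : PairIdx D) = s := rfl
    rw [this]
    simp
  · show coeff 0 (linP y.1 μ - (- linP y.1 μ - C (y.2 μ))) = y.2 μ
    have : coeff 0 (linP y.1 μ) = 0 := by
      simp [linP, coeff_sum, coeff_C_mul]
    simp [this]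

lemma ker_inv {D : ℕ} (p : PairVF D) (hp : p ∈ solS D) :
    invMap D p = 0 ↔ p ∈ trivT D := by
  constructor
  · intro h0
    have hS : ∀ μ ν, pderiv μ (p.1 ν) = pderiv ν (p.2 μ) := hp.1
    have hcurl : ∀ i j, pderiv i (p.1 j) - pderiv j (p.1 i) =
        C (coeff 0 (pderiv i (p.1 j) - pderiv j (p.1 i))) := by
      intro i j
      apply eq_C_of_pderiv
      intro k
      rw [map_sub, pd_comm' D k i, hS k j, pd_comm' D k j, hS k i, pd_comm' D i j, sub_self]
    have hlt : ∀ i j, i < j → pderiv i (p.1 j) = pderiv j (p.1 i) := by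
      intro i j hij
      have h1 : coeff 0 (pderiv i (p.1 j) - pderiv j (p.1 i)) = 0 :=
        congrFun (congrArg Prod.fst h0) (⟨j, ⟨i, hij⟩⟩ : PairIdx D)
      have h2 := hcurl i j
      rw [h1, C_0] at h2
      exact sub_eq_zero.1 h2
    have hcf : ∀ i j, pderiv i (p.1 j) = pderiv j (p.1 i) := by
      intro i j
      rcases lt_trichotomy i j with h | h | h
      · exact hlt i j h
      · rw [h]
      · exact (hlt j i h).symm
    obtain ⟨R, hR⟩ := poincare D p.1 hcf
    have heq : ∀ μ, p.1 μ = p.2 μ := by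
      intro μ
      have h1 : p.1 μ - p.2 μ = C (coeff 0 (p.1 μ - p.2 μ)) := by
        apply eq_C_of_pderiv
        intro k
        rw [map_sub, hcf k μ, hS μ k, sub_self]
      have h2 : coeff 0 (p.1 μ - p.2 μ) = 0 := congrFun (congrArg Prod.snd h0) μ
      rw [h2, C_0] at h1
      exact sub_eq_zero.1 h1
    refine ⟨R, Prod.ext (funext fun μ => hR μ) (funext fun μ => ?_)⟩
    rw [← heq μ]
    exact hR μ
  · rintro ⟨R, rfl⟩
    refine Prod.ext (funext fun s => ?_) (funext fun μ => ?_)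
    · show coeff 0 (pderiv (lowIdx s) (pderiv s.1 R) - pderiv s.1 (pderiv (lowIdx s) R)) = 0
      rw [pd_comm', sub_self, coeff_zero]
    · show coeff 0 (pderiv μ R - pderiv μ R) = 0
      rw [sub_self, coeff_zero]

lemma ker_eq (D : ℕ) :
    (trivT D).comap (solS D).subtype = LinearMap.ker ((invMap D).comp (solS D).subtype) := by
  ext p
  exact (ker_inv p.1 p.2).symm

/-- The quotient is isomorphic to the space of invariants. -/
noncomputable def quotEquiv (D : ℕ) :
    (solS D ⧸ (trivT D).comap (solS D).subtype) ≃ₗ[ℂ] (PairIdx D → ℂ) × (Fin D → ℂ) :=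
  (Submodule.quotEquivOfEq _ _ (ker_eq D)).trans
    (((invMap D).comp (solS D).subtype).quotKerEquivOfSurjective
      fun y => ⟨⟨secMap y, secMap_mem y⟩, inv_secMap y⟩)

/-- Lemma 1 of the paper: for `D ≥ 2` the quotient `H¹ = S/T` of the space of solutions of the
system (S) by the trivial solutions is finite dimensional of dimension `D(D+1)/2`, and every
cohomology class has a representative of total degree at most one. -/
theorem h1_dim_and_low_degree_representatives (D : ℕ) (hD : 2 ≤ D) :
    Module.Finite ℂ (solS D ⧸ (trivT D).comap (solS D).subtype) ∧
    Module.finrank ℂ (solS D ⧸ (trivT D).comap (solS D).subtype) = D * (D + 1) / 2 ∧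
    ∀ x : solS D ⧸ (trivT D).comap (solS D).subtype, ∃ p : solS D,
      Submodule.Quotient.mk p = x ∧
      (∀ μ, ((p : PairVF D).1 μ).totalDegree ≤ 1) ∧
      (∀ μ, ((p : PairVF D).2 μ).totalDegree ≤ 1) := by
  refine ⟨Module.Finite.equiv (quotEquiv D).symm, ?_, ?_⟩
  · rw [(quotEquiv D).finrank_eq, Module.finrank_prod, Module.finrank_fintype_fun_eq_card,
      Module.finrank_fintype_fun_eq_card, Fintype.card_sigma]
    simp only [Fintype.card_fin]
    rw [Fin.sum_univ_eq_sum_range (fun i => i) D, ← Finset.sum_range_succ, Finset.sum_range_id,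
      Nat.add_sub_cancel, mul_comm]
  · intro x
    obtain ⟨q, rfl⟩ := Submodule.Quotient.mk_surjective _ x
    refine ⟨⟨secMap (invMap D q.1), secMap_mem _⟩, ?_, fun μ => linP_degree _ μ, fun μ => ?_⟩
    · rw [Submodule.Quotient.eq, ker_eq, LinearMap.mem_ker, map_sub, sub_eq_zero]
      exact inv_secMap _
    · refine (totalDegree_sub _ _).trans (max_le ?_ ?_)
      · rw [totalDegree_neg]
        exact linP_degree _ μ
      · rw [totalDegree_C]
        exact Nat.zero_le 1
end

section
/- Let D ≥ 2. For each n ≥ 0 let S_n be the space of pairs (P, P̄) of homogeneous degree-n polynomial vector fields satisfying the system (S): ∂_μ P_ν = ∂_ν P̄_μ for all μ, ν and Σ_μ ∂^μ P_μ = Σ_μ ∂^μ P̄_μ, and let T_n = {(∇R, ∇R) : R a homogeneous polynomial of degree n+1} ⊆ S_n. Then dim_ℂ S_0/T_0 = D, dim_ℂ S_1/T_1 = D(D−1)/2, and S_n = T_n for all n ≥ 2. (These are the graded dimensions of the ghost-number-one cohomology of the zero-momentum extended closed-string complex, matching the generators of the Poincaré algebra: D translations and D(D−1)/2 Lorentz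 rotations.) -/
open MvPolynomial

/-- Pairs of vector fields all of whose components are homogeneous of degree `n`. -/
noncomputable def homPairVF (D n : ℕ) : Submodule ℂ (PairVF D) :=
  (Submodule.pi Set.univ fun _ : Fin D => homogeneousSubmodule (Fin D) ℂ n).prod
  (Submodule.pi Set.univ fun _ : Fin D => homogeneousSubmodule (Fin D) ℂ n)

/-- `S_n`: homogeneous degree-`n` solutions of the system (S). -/
noncomputable def solSn (D n : ℕ) : Submodule ℂ (PairVF D) :=
  solS D ⊓ homPairVF D n

/-- `T_n`: trivial solutions `(∇R, ∇R)` with `R` homogeneous of degree `n+1`. -/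
noncomputable def trivTn (D n : ℕ) : Submodule ℂ (PairVF D) :=
  (homogeneousSubmodule (Fin D) ℂ (n + 1)).map (gradPair D)


lemma gh_pd_apply (D : ℕ) (μ : Fin D) (p : MvPolynomial (Fin D) ℂ) :
    pd D μ p = pderiv μ p := rfl

lemma gh_hom_zero {D n : ℕ} {φ : MvPolynomial (Fin D) ℂ} (hφ : φ.IsHomogeneous n)
    (hn : n ≠ 0) (h : ∀ μ, pderiv μ φ = 0) : φ = 0 := by
  have e := hφ.sum_X_mul_pderiv
  simp only [h, mul_zero, Finset.sum_const_zero] at e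
  have e2 : (n : ℕ) • φ = 0 := e.symm
  rcases smul_eq_zero.mp e2 with h | h
  · exact absurd h hn
  · exact h

lemma gh_hom_const {D : ℕ} {φ : MvPolynomial (Fin D) ℂ} (hφ : φ.IsHomogeneous 0)
    (h : coeff 0 φ = 0) : φ = 0 := by
  have e : φ.totalDegree = 0 := Nat.le_zero.mp hφ.totalDegree_le
  rw [totalDegree_eq_zero_iff_eq_C.mp e, h, C_0]

lemma gh_pderiv_comm {D : ℕ} (μ ν : Fin D) (φ : MvPolynomial (Fin D) ℂ) :
    pderiv μ (pderiv ν φ) = pderiv ν (pderiv μ φ) := by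
  have h : ⁅(pderiv μ : Derivation ℂ (MvPolynomial (Fin D) ℂ) (MvPolynomial (Fin D) ℂ)),
      (pderiv ν : Derivation ℂ (MvPolynomial (Fin D) ℂ) (MvPolynomial (Fin D) ℂ))⁆ = 0 := by
    apply MvPolynomial.derivation_ext
    intro i
    simp [Derivation.commutator_apply, pderiv_X, Pi.single_apply, apply_ite]
  have := congrArg (fun d => d φ) h
  simpa [Derivation.commutator_apply, sub_eq_zero] using this

lemma gh_mem_hom {D n : ℕ} {p : PairVF D} : p ∈ homPairVF D n ↔
    (∀ μ, (p.1 μ).IsHomogeneous n) ∧ (∀ μ, (p.2 μ).IsHomogeneous n) := by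
  simp [homPairVF, Submodule.mem_prod, Submodule.mem_pi, mem_homogeneousSubmodule]

lemma gh_mem_sol {D : ℕ} {p : PairVF D} : p ∈ solS D ↔
    (∀ μ ν, pderiv μ (p.1 ν) = pderiv ν (p.2 μ)) ∧
    (∑ μ, pdU D μ (p.1 μ)) = ∑ μ, pdU D μ (p.2 μ) := Iff.rfl

lemma gh_mem_triv {D n : ℕ} {p : PairVF D} : p ∈ trivTn D n ↔
    ∃ R : MvPolynomial (Fin D) ℂ, R.IsHomogeneous (n + 1) ∧
      (∀ μ, pderiv μ R = p.1 μ) ∧ (∀ μ, pderiv μ R = p.2 μ) := by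
  constructor
  · rintro ⟨R, hR, rfl⟩
    exact ⟨R, hR, fun _ => rfl, fun _ => rfl⟩
  · rintro ⟨R, hR, h1, h2⟩
    exact ⟨R, hR, Prod.ext (funext h1) (funext h2)⟩

lemma gh_poincare {D n : ℕ} {P : Fin D → MvPolynomial (Fin D) ℂ}
    (hP : ∀ μ, (P μ).IsHomogeneous n)
    (hc : ∀ μ ν, pderiv μ (P ν) = pderiv ν (P μ)) :
    ∃ R : MvPolynomial (Fin D) ℂ, R.IsHomogeneous (n + 1) ∧ ∀ μ, pderiv μ R = P μ := by
  refine ⟨((n : ℂ) + 1)⁻¹ • ∑ μ, X μ * P μ, ?_, fun ν => ?_⟩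
  · rw [← mem_homogeneousSubmodule]
    refine Submodule.smul_mem _ _ (Submodule.sum_mem _ fun μ _ => ?_)
    rw [mem_homogeneousSubmodule, add_comm]
    exact (isHomogeneous_X _ _).mul (hP μ)
  · have e := (hP ν).sum_X_mul_pderiv
    have hn : (n : ℂ) + 1 ≠ 0 := by exact_mod_cast Nat.succ_ne_zero n
    have e2 : pderiv ν (∑ μ, X μ * P μ) = ((n : ℂ) + 1) • P ν := by
      simp only [map_sum, Derivation.leibniz, smul_eq_mul, Finset.sum_add_distrib,
        hc ν, e, pderiv_X, Pi.single_apply]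
      simp [add_smul, Nat.cast_smul_eq_nsmul]
    rw [Derivation.map_smul, e2, smul_smul, inv_mul_cancel₀ hn, one_smul]

lemma gh_triv_curl {D n : ℕ} {p : PairVF D} (h : p ∈ trivTn D n) :
    p.1 = p.2 ∧ ∀ μ ν, pderiv μ (p.1 ν) = pderiv ν (p.1 μ) := by
  obtain ⟨R, _, h1, h2⟩ := gh_mem_triv.mp h
  have e : ∀ μ, p.1 μ = p.2 μ := by
    intro μ
    rw [← h1 μ]
    exact h2 μ
  refine ⟨funext e, fun μ ν => ?_⟩
  rw [← h1 ν, ← h1 μ]; exact gh_pderiv_comm μ ν R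

lemma gh_triv_of_curl {D n : ℕ} {p : PairVF D} (hh : p ∈ homPairVF D n)
    (h : p.1 = p.2) (hc : ∀ μ ν, pderiv μ (p.1 ν) = pderiv ν (p.1 μ)) :
    p ∈ trivTn D n := by
  obtain ⟨R, hR, h1⟩ := gh_poincare (gh_mem_hom.mp hh).1 hc
  exact gh_mem_triv.mpr ⟨R, hR, h1, fun μ => by rw [h1, h]⟩

lemma gh_eq_of_curl {D n : ℕ} (hn : n ≠ 0) {p : PairVF D} (hp : p ∈ solSn D n)
    (hc : ∀ μ ν, pderiv μ (p.1 ν) = pderiv ν (p.1 μ)) : p.1 = p.2 := by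
  obtain ⟨h1, h2⟩ := gh_mem_hom.mp hp.2
  funext μ
  refine sub_eq_zero.mp (gh_hom_zero ((h1 μ).sub (h2 μ)) hn fun ν => ?_)
  rw [map_sub, ← (gh_mem_sol.mp hp.1).1, hc, sub_self]

lemma gh_triv_le {D n : ℕ} : trivTn D n ≤ solSn D n := by
  intro p hp
  obtain ⟨h1, h2⟩ := gh_triv_curl hp
  obtain ⟨R, hR, h3, h4⟩ := gh_mem_triv.mp hp
  refine ⟨gh_mem_sol.mpr ⟨fun μ ν => ?_, by rw [h1]⟩, gh_mem_hom.mpr ⟨fun μ => ?_, fun μ => ?_⟩⟩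
  · rw [h2, h1]
  · rw [← h3]; exact hR.pderiv
  · rw [← h4]; exact hR.pderiv

lemma gh_high {D n : ℕ} (hn : 2 ≤ n) : solSn D n = trivTn D n := by
  refine le_antisymm (fun p hp => ?_) gh_triv_le
  have hc : ∀ μ ν, pderiv μ (p.1 ν) = pderiv ν (p.1 μ) := by
    intro μ ν
    obtain ⟨h1, h2⟩ := gh_mem_hom.mp hp.2
    have hs := (gh_mem_sol.mp hp.1).1
    refine sub_eq_zero.mp (gh_hom_zero ((h1 ν).pderiv.sub (h1 μ).pderiv)
      (by omega : n - 1 ≠ 0) fun l => ?_)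
    rw [map_sub, gh_pderiv_comm l μ, gh_pderiv_comm l ν, hs, hs, gh_pderiv_comm, sub_self]
  exact gh_triv_of_curl hp.2 (gh_eq_of_curl (by omega) hp hc) hc

lemma gh_zero (D : ℕ) :
    Module.finrank ℂ (solSn D 0 ⧸ (trivTn D 0).comap (solSn D 0).subtype) = D := by
  let f : PairVF D →ₗ[ℂ] (Fin D → ℂ) :=
    LinearMap.pi fun μ => (lcoeff ℂ (0 : Fin D →₀ ℕ)) ∘ₗ
      (LinearMap.proj μ ∘ₗ (LinearMap.fst ℂ _ _ - LinearMap.snd ℂ _ _))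
  have hf : ∀ p μ, f p μ = coeff 0 (p.1 μ - p.2 μ) := fun p μ => rfl
  let g := f ∘ₗ (solSn D 0).subtype
  have hk : (trivTn D 0).comap (solSn D 0).subtype = LinearMap.ker g := by
    ext ⟨p, hp⟩
    simp only [Submodule.mem_comap, Submodule.subtype_apply, LinearMap.mem_ker]
    constructor
    · intro h
      funext μ
      change f p μ = 0
      rw [hf, (gh_triv_curl h).1, sub_self, coeff_zero]
    · intro h
      obtain ⟨h1, h2⟩ := gh_mem_hom.mp hp.2
      have e : ∀ μ, p.1 μ = p.2 μ := by
        intro μ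
        have hμ : coeff 0 (p.1 μ - p.2 μ) = 0 := by
          rw [← hf]
          exact congrFun h μ
        exact sub_eq_zero.mp (gh_hom_const ((h1 μ).sub (h2 μ)) hμ)
      refine gh_triv_of_curl hp.2 (funext e) fun μ ν => ?_
      have hz : ∀ ν, p.1 ν = C (coeff 0 (p.1 ν)) := fun ν =>
        totalDegree_eq_zero_iff_eq_C.mp (Nat.le_zero.mp (h1 ν).totalDegree_le)
      have hz2 : ∀ μ ν, pderiv μ (p.1 ν) = 0 := by
        intro μ ν
        rw [hz ν]
        exact pderiv_C
      rw [hz2, hz2]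
  have hs : Function.Surjective g := by
    intro c
    refine ⟨⟨(fun μ => C (c μ), 0), gh_mem_sol.mpr ⟨fun μ ν => ?_, ?_⟩,
      gh_mem_hom.mpr ⟨fun μ => isHomogeneous_C _ _, fun μ => isHomogeneous_zero _ _ _⟩⟩, ?_⟩
    · simp
    · refine Finset.sum_congr rfl fun μ _ => ?_
      have e : pd D μ (C (c μ)) = pd D μ 0 := by
        rw [gh_pd_apply, pderiv_C, map_zero]
      exact congrArg (fun q => (if (μ : ℕ) = 0 then (-1 : ℂ) else 1) • q) e
    · funext μ
      change f _ μ = _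
      rw [hf]; simp
  rw [hk, (g.quotKerEquivOfSurjective hs).finrank_eq]
  simp

lemma gh_one (D : ℕ) :
    Module.finrank ℂ (solSn D 1 ⧸ (trivTn D 1).comap (solSn D 1).subtype)
      = D * (D - 1) / 2 := by
  let ι := Σ ν : Fin D, Fin (ν : ℕ)
  let em : ∀ x : ι, Fin D := fun x => ⟨x.2, x.2.2.trans x.1.2⟩
  let f : PairVF D →ₗ[ℂ] (ι → ℂ) :=
    LinearMap.pi fun x => (lcoeff ℂ (0 : Fin D →₀ ℕ)) ∘ₗ
      (pd D (em x) ∘ₗ LinearMap.proj x.1 - pd D x.1 ∘ₗ LinearMap.proj (em x))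
        ∘ₗ LinearMap.fst ℂ _ _
  have hf : ∀ p x, f p x = coeff 0 (pderiv (em x) (p.1 x.1) - pderiv x.1 (p.1 (em x))) :=
    fun p μ => rfl
  let g := f ∘ₗ (solSn D 1).subtype
  have hk : (trivTn D 1).comap (solSn D 1).subtype = LinearMap.ker g := by
    ext ⟨p, hp⟩
    simp only [Submodule.mem_comap, Submodule.subtype_apply, LinearMap.mem_ker]
    constructor
    · intro h
      funext x
      change f p x = 0
      rw [hf, (gh_triv_curl h).2, sub_self, coeff_zero]
    · intro h
      obtain ⟨h1, h2⟩ := gh_mem_hom.mp hp.2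
      have hlt : ∀ μ ν : Fin D, μ < ν → pderiv μ (p.1 ν) = pderiv ν (p.1 μ) := by
        intro μ ν hμν
        exact sub_eq_zero.mp (gh_hom_const ((h1 ν).pderiv.sub (h1 μ).pderiv)
          (congrFun h ⟨ν, ⟨μ, hμν⟩⟩))
      have hc : ∀ μ ν : Fin D, pderiv μ (p.1 ν) = pderiv ν (p.1 μ) := by
        intro μ ν
        rcases lt_trichotomy μ ν with h | h | h
        · exact hlt _ _ h
        · rw [h]
        · exact (hlt _ _ h).symm
      exact gh_triv_of_curl hp.2 (gh_eq_of_curl one_ne_zero hp hc) hc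
  have hs : Function.Surjective g := by
    intro c
    let A : Fin D → Fin D → ℂ := fun ν μ =>
      if h : (μ : ℕ) < ν then c ⟨ν, ⟨μ, h⟩⟩ else 0
    have hd : ∀ (B : Fin D → ℂ) (μ : Fin D),
        pderiv μ (∑ l, C (B l) * X l : MvPolynomial (Fin D) ℂ) = C (B μ) := by
      intro B μ
      simp [pderiv_X, Pi.single_apply]
    have hh : ∀ (B : Fin D → ℂ),
        (∑ l, C (B l) * X l : MvPolynomial (Fin D) ℂ).IsHomogeneous 1 := by
      intro B
      refine IsHomogeneous.sum _ _ _ fun l _ => ?_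
      exact isHomogeneous_C_mul_X _ _
    refine ⟨⟨(fun ν => ∑ l, C (A ν l) * X l, fun μ => ∑ l, C (A l μ) * X l),
      gh_mem_sol.mpr ⟨fun μ ν => ?_, ?_⟩,
      gh_mem_hom.mpr ⟨fun μ => hh _, fun μ => hh _⟩⟩, ?_⟩
    · simp only [hd]
    · refine Finset.sum_congr rfl fun μ _ => ?_
      have e : pd D μ (∑ l, C (A μ l) * X l) = pd D μ (∑ l, C (A l μ) * X l) := by
        rw [gh_pd_apply, gh_pd_apply, hd (A μ) μ, hd (fun l => A l μ) μ]
      exact congrArg (fun q => (if (μ : ℕ) = 0 then (-1 : ℂ) else 1) • q) e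
    · funext x
      change coeff 0 (pderiv (em x) (∑ l, C (A x.1 l) * X l : MvPolynomial (Fin D) ℂ)
        - pderiv x.1 (∑ l, C (A (em x) l) * X l : MvPolynomial (Fin D) ℂ)) = _
      rw [hd (A x.1), hd (A (em x))]
      have h1 : A x.1 (em x) = c x := dif_pos x.2.2
      have h2 : A (em x) x.1 = 0 := dif_neg (not_lt.mpr x.2.2.le)
      rw [h1, h2]; simp
  rw [hk, (g.quotKerEquivOfSurjective hs).finrank_eq, Module.finrank_fintype_fun_eq_card,
    Fintype.card_sigma]
  simp only [Fintype.card_fin]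
  rw [Fin.sum_univ_eq_sum_range (fun i => i) D, Finset.sum_range_id]

/-- Graded dimensions of the ghost number one cohomology of the zero-momentum extended
closed-string complex: `dim S₀/T₀ = D` (translations), `dim S₁/T₁ = D(D-1)/2` (Lorentz
rotations), and `S_n = T_n` for `n ≥ 2`. -/
theorem ghost_number_one_graded_dimensions (D : ℕ) (hD : 2 ≤ D) :
    Module.finrank ℂ (solSn D 0 ⧸ (trivTn D 0).comap (solSn D 0).subtype) = D ∧
    Module.finrank ℂ (solSn D 1 ⧸ (trivTn D 1).comap (solSn D 1).subtype)
      = D * (D - 1) / 2 ∧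
    ∀ n : ℕ, 2 ≤ n → solSn D n = trivTn D n := by
  exact ⟨gh_zero D, gh_one D, fun n hn => gh_high hn⟩
end

section
/- Let D ≥ 2. Suppose P and P̄ are polynomial vector fields with Σ_μ ∂^μ P_μ = Σ_μ ∂^μ P̄_μ. Then there exist a D×D matrix of polynomials Q = (Q_{μν}) and a polynomial R such that for every μ: P_μ = Σ_ν ∂^ν Q_{μν} + ∂_μ R and P̄_μ = Σ_ν ∂^ν Q_{νμ} + ∂_μ R. (Vanishing of the ghost-number-four cohomology H⁴ of the polynomial complex computing the zero-momentum semi-relative cohomology of the extended closed-string complex.) -/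
open MvPolynomial

lemma pd_apply' (D : ℕ) (i : Fin D) (p : MvPolynomial (Fin D) ℂ) :
    pd D i p = pderiv i p := rfl

/-- Scale the monomial of degree `k` by `1 / (k + c)`. -/
noncomputable def scl (D c : ℕ) :
    MvPolynomial (Fin D) ℂ →ₗ[ℂ] MvPolynomial (Fin D) ℂ :=
  (basisMonomials (Fin D) ℂ).constr ℂ
    (fun m => monomial m (((m.degree : ℂ) + c)⁻¹))

lemma scl_monomial (D c : ℕ) (m : Fin D →₀ ℕ) (a : ℂ) :
    scl D c (monomial m a) = monomial m (a * ((m.degree : ℂ) + c)⁻¹) := by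
  have h1 : (monomial m a : MvPolynomial (Fin D) ℂ)
      = a • (basisMonomials (Fin D) ℂ) m := by
    simp [smul_monomial]
  rw [h1, map_smul, scl, Module.Basis.constr_basis, smul_monomial, smul_eq_mul]

lemma pd_scl (D c : ℕ) (i : Fin D) (p : MvPolynomial (Fin D) ℂ) :
    pd D i (scl D c p) = scl D (c + 1) (pd D i p) := by
  induction p using MvPolynomial.induction_on' with
  | add p q hp hq => simp only [map_add, hp, hq]
  | monomial m a =>
    simp only [pd_apply', scl_monomial,
      pderiv_monomial]
    by_cases h : m i = 0
    · simp [h]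
    · have h2 : m.degree = (m - Finsupp.single i 1).degree + 1 := by
        conv_lhs => rw [← Finsupp.sub_add_single_one_cancel h]
        simp [map_add]
      rw [h2]
      push_cast
      congr 1
      rw [add_assoc, add_comm (1 : ℂ) c]
      ring

lemma euler (D c : ℕ) (hc : 0 < c) (p : MvPolynomial (Fin D) ℂ) :
    ∑ i, X i * pd D i (scl D c p) + (c : ℂ) • scl D c p = p := by
  induction p using MvPolynomial.induction_on' with
  | add p q hp hq =>
    simp only [map_add, mul_add, Finset.sum_add_distrib, smul_add]
    conv_rhs => rw [← hp, ← hq]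
    abel
  | monomial m a =>
    have h0 : ((m.degree : ℂ) + c) ≠ 0 := by
      exact_mod_cast (by omega : m.degree + c ≠ 0)
    simp only [pd_apply', scl_monomial,
      X_mul_pderiv_monomial]
    rw [← Finset.sum_smul, ← Finsupp.degree_eq_sum, ← Nat.cast_smul_eq_nsmul ℂ, ← add_smul,
      smul_monomial, smul_eq_mul]
    congr 1
    field_simp

lemma exists_antideriv (D : ℕ) (i : Fin D) (p : MvPolynomial (Fin D) ℂ) :
    ∃ q, pd D i q = p := by
  induction p using MvPolynomial.induction_on' with
  | monomial m a =>
    refine ⟨monomial (m + Finsupp.single i 1) (a * ((m i : ℂ) + 1)⁻¹), ?_⟩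
    have h0 : ((m i : ℂ) + 1) ≠ 0 := by exact_mod_cast Nat.succ_ne_zero (m i)
    simp only [pd_apply', pderiv_monomial]
    simp [h0]
  | add p q hp hq =>
    obtain ⟨u, rfl⟩ := hp
    obtain ⟨v, rfl⟩ := hq
    exact ⟨u + v, map_add _ _ _⟩

/-- The sign of the Minkowski metric. -/
noncomputable def eps (D : ℕ) (μ : Fin D) : ℂ := if (μ : ℕ) = 0 then -1 else 1

lemma eps_sq (D : ℕ) (μ : Fin D) : eps D μ * eps D μ = 1 := by
  unfold eps; split_ifs <;> norm_num

lemma pdU_eq (D : ℕ) (μ : Fin D) (p : MvPolynomial (Fin D) ℂ) :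
    pdU D μ p = C (eps D μ) * pderiv μ p := by
  rw [← smul_eq_C_mul]; rfl

lemma pdU_antideriv (D : ℕ) (i : Fin D) (p : MvPolynomial (Fin D) ℂ) :
    ∃ q, pdU D i q = p := by
  obtain ⟨q, hq⟩ := exists_antideriv D i (C (eps D i) * p)
  refine ⟨q, ?_⟩
  have hq' : pderiv i q = C (eps D i) * p := hq
  rw [pdU_eq, hq', ← mul_assoc, ← C_mul, eps_sq, C_1, one_mul]

lemma div_free (D : ℕ) (hD : 2 ≤ D) (A : Fin D → MvPolynomial (Fin D) ℂ)
    (h : ∑ μ, pdU D μ (A μ) = 0) :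
    ∃ W : Fin D → Fin D → MvPolynomial (Fin D) ℂ, (∀ μ ν, W ν μ = - W μ ν) ∧
      ∀ μ, A μ = ∑ ν, pdU D ν (W μ ν) := by
  set B : Fin D → MvPolynomial (Fin D) ℂ := fun μ => scl D (D - 1) (A μ) with hB
  have hdiv : ∑ ν, C (eps D ν) * pderiv ν (B ν) = 0 := by
    have h1 := congrArg (scl D (D - 1 + 1)) h
    rw [map_sum, map_zero] at h1
    rw [← h1]
    refine Finset.sum_congr rfl fun ν _ => ?_
    have h2 : pderiv ν (B ν) = scl D (D - 1 + 1) (pd D ν (A ν)) := pd_scl D (D - 1) ν (A ν)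
    rw [h2, pdU_eq, ← smul_eq_C_mul, ← smul_eq_C_mul, map_smul]
    rfl
  refine ⟨fun μ ν => C (eps D ν) * X ν * B μ - C (eps D μ) * X μ * B ν, fun μ ν => by ring,
    fun μ => ?_⟩
  have key : ∀ ν, pdU D ν (C (eps D ν) * X ν * B μ - C (eps D μ) * X μ * B ν)
      = B μ + X ν * pderiv ν (B μ) - (if ν = μ then B μ else 0)
        - C (eps D μ) * X μ * (C (eps D ν) * pderiv ν (B ν)) := by
    intro ν
    have hs : (C (eps D ν) * C (eps D ν) : MvPolynomial (Fin D) ℂ) = 1 := by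
      rw [← C_mul, eps_sq, C_1]
    rw [pdU_eq, map_sub, mul_assoc, mul_assoc, pderiv_C_mul, pderiv_C_mul, pderiv_mul, pderiv_mul,
      pderiv_X_self]
    by_cases hn : ν = μ
    · subst hn
      rw [if_pos rfl, pderiv_X_self]
      linear_combination (B ν + X ν * pderiv ν (B ν) - B ν) * hs
    · rw [if_neg hn, pderiv_X_of_ne (fun e => hn e.symm)]
      linear_combination (B μ + X ν * pderiv ν (B μ)) * hs
  have he := euler D (D - 1) (by omega) (A μ)
  have he' : ∑ ν, X ν * pderiv ν (B μ) + ((D - 1 : ℕ) : ℂ) • B μ = A μ := he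
  rw [Finset.sum_congr rfl fun ν _ => key ν]
  rw [Finset.sum_sub_distrib, Finset.sum_sub_distrib, Finset.sum_add_distrib, ← Finset.mul_sum,
    hdiv, mul_zero, Finset.sum_ite_eq', if_pos (Finset.mem_univ _), Finset.sum_const,
    Finset.card_univ, Fintype.card_fin, ← he', Nat.cast_smul_eq_nsmul]
  obtain ⟨k, rfl⟩ : ∃ k, D = k + 1 := ⟨D - 1, by omega⟩
  rw [Nat.add_sub_cancel, succ_nsmul]
  abel

/-- Lemma 3 of the paper (`H⁴ = 0`): any pair of polynomial vector fields `(P, P̄)` with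
`Σ_μ ∂^μ P_μ = Σ_μ ∂^μ P̄_μ` is of the form
`P_μ = Σ_ν ∂^ν Q_{μν} + ∂_μ R`, `P̄_μ = Σ_ν ∂^ν Q_{νμ} + ∂_μ R`
for some matrix of polynomials `Q` and polynomial `R`. -/
theorem ghost_number_four_cohomology_vanishes (D : ℕ) (hD : 2 ≤ D)
    (P Pb : Fin D → MvPolynomial (Fin D) ℂ)
    (h : (∑ μ, pdU D μ (P μ)) = ∑ μ, pdU D μ (Pb μ)) :
    ∃ (Q : Fin D → Fin D → MvPolynomial (Fin D) ℂ) (R : MvPolynomial (Fin D) ℂ),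
      (∀ μ, P μ = (∑ ν, pdU D ν (Q μ ν)) + pd D μ R) ∧
      (∀ μ, Pb μ = (∑ ν, pdU D ν (Q ν μ)) + pd D μ R) := by
  have hhalf : ∀ p : MvPolynomial (Fin D) ℂ, C (1 / 2 : ℂ) * p + C (1 / 2 : ℂ) * p = p := by
    intro p
    rw [← add_mul, ← C_add]
    norm_num
  obtain ⟨W, hW, hA⟩ := div_free D hD (fun μ => C (1 / 2 : ℂ) * (P μ - Pb μ)) (by
    simp only [← smul_eq_C_mul, map_smul, map_sub, smul_sub]
    rw [Finset.sum_sub_distrib, ← Finset.smul_sum, ← Finset.smul_sum, h, sub_self])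
  choose S hS using fun μ => pdU_antideriv D μ (C (1 / 2 : ℂ) * (P μ + Pb μ))
  have hdiag : ∀ μ, ∑ ν, pdU D ν (if ν = μ then S μ else 0)
      = C (1 / 2 : ℂ) * (P μ + Pb μ) := by
    intro μ
    rw [Finset.sum_eq_single μ]
    · rw [if_pos rfl, hS]
    · intro b _ hb
      rw [if_neg hb, map_zero]
    · intro hb
      exact absurd (Finset.mem_univ _) hb
  refine ⟨fun μ ν => (if ν = μ then S μ else 0) + W μ ν, 0, fun μ => ?_, fun μ => ?_⟩
  · simp only [map_add, map_zero, add_zero, Finset.sum_add_distrib]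
    rw [hdiag, ← hA]
    linear_combination - hhalf (P μ)
  · have h3 : ∀ ν, ((if μ = ν then S ν else 0) + W ν μ)
        = (if ν = μ then S μ else 0) - W μ ν := by
      intro ν
      rw [hW μ ν, ← sub_eq_add_neg]
      by_cases hn : ν = μ
      · subst hn; rfl
      · rw [if_neg hn, if_neg (fun e => hn e.symm)]
    simp only [h3, map_sub, map_zero, add_zero, Finset.sum_sub_distrib]
    rw [hdiag, ← hA]
    linear_combination - hhalf (Pb μ)
end

section
/- Let D ≥ 2 and let p ∈ ℝ^D (regarded as a vector of complex scalars) be nonzero and null, i.e. Σ_μ p^μ p_μ = 0 where p^μ := η^{μμ} p_μ. Then the directional-derivative map P ↦ (Σ_ν p^ν ∂_ν P_μ)_μ is surjective from the space of transverse polynomial vector fields onto itself: for every polynomial vector field Q with Σ_μ p^μ Q_μ = 0 there exists a polynomial vector field P with Σ_μ p^μ P_μ = 0 and Σ_ν p^ν ∂_ν P_μ = Q_μ for every μ. (Surjectivity of the first differential d₁ : P_μ ↦ −i p^ν ∂_ν P_μ in the massless (p² = 0, p ≠ 0) spectral sequence, which forces the ghost-number-two cohomology of the massless chiral extended complex to vanish.)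 -/
open MvPolynomial

/-- The raised-index component `p^μ = η^{μμ} p_μ` of a vector `p ∈ ℝ^D` for the Minkowski
metric `η = diag(-1, 1, …, 1)` (no sum over `μ`). -/
def pUp {D : ℕ} (p : Fin D → ℝ) (μ : Fin D) : ℝ :=
  (if (μ : ℕ) = 0 then (-1 : ℝ) else 1) * p μ

/-- The directional derivative along `c`. -/
noncomputable def dirD {D : ℕ} (c : Fin D → ℂ) :
    Module.End ℂ (MvPolynomial (Fin D) ℂ) := ∑ ν, c ν • pd D ν

lemma dirD_apply {D : ℕ} (c : Fin D → ℂ) (f : MvPolynomial (Fin D) ℂ) :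
    dirD c f = ∑ ν, c ν • pd D ν f := by
  simp [dirD, LinearMap.sum_apply]

lemma dirD_mul {D : ℕ} (c : Fin D → ℂ) (f g : MvPolynomial (Fin D) ℂ) :
    dirD c (f * g) = f * dirD c g + g * dirD c f := by
  simp only [dirD_apply, pd, Finset.mul_sum, ← Finset.sum_add_distrib]
  refine Finset.sum_congr rfl fun ν _ => ?_
  simp [Derivation.leibniz, smul_add, mul_smul_comm]

lemma dirD_X {D : ℕ} (c : Fin D → ℂ) (i : Fin D) : dirD c (X i) = C (c i) := by
  simp only [dirD_apply, pd, Derivation.coeFn_coe, pderiv_X]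
  rw [Finset.sum_eq_single i]
  · simp [smul_eq_C_mul]
  · intro b _ hb
    simp [Pi.single_apply, hb.symm]
  · simp

lemma dirD_C {D : ℕ} (c : Fin D → ℂ) (a : ℂ) : dirD c (C a) = 0 := by
  simp [dirD_apply, pd]

lemma dirD_X_nil {D : ℕ} (c : Fin D → ℂ) (i : Fin D) (n : ℕ) :
    ∀ f, (dirD c ^ n) f = 0 → (dirD c ^ (n + 1)) (X i * f) = 0 := by
  induction n with
  | zero =>
    intro f hf
    have : f = 0 := by simpa using hf
    simp [this]
  | succ n ih =>
    intro f hf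
    rw [pow_succ, Module.End.mul_apply, dirD_mul, dirD_X, map_add,
      ih _ (by rwa [pow_succ, Module.End.mul_apply] at hf), zero_add, mul_comm,
      ← smul_eq_C_mul, map_smul, hf, smul_zero]

lemma dirD_nil {D : ℕ} (c : Fin D → ℂ) (f : MvPolynomial (Fin D) ℂ) :
    ∃ n, (dirD c ^ n) f = 0 := by
  induction f using MvPolynomial.induction_on with
  | C a => exact ⟨1, by rw [pow_one, dirD_C]⟩
  | add f g hf hg =>
    obtain ⟨n, hn⟩ := hf
    obtain ⟨m, hm⟩ := hg
    refine ⟨n + m, ?_⟩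
    rw [map_add]
    nth_rw 1 [add_comm n m]
    rw [pow_add, pow_add, Module.End.mul_apply, Module.End.mul_apply, hn, hm]
    simp
  | mul_X f i hf =>
    obtain ⟨n, hn⟩ := hf
    exact ⟨n + 1, by rw [mul_comm]; exact dirD_X_nil c i n f hn⟩

lemma dirD_X_pow {D : ℕ} (c : Fin D → ℂ) (k : Fin D) (m : ℕ) :
    dirD c (X k ^ (m + 1)) = C ((m + 1) * c k) * X k ^ m := by
  induction m with
  | zero => simp [dirD_X]
  | succ m ih =>
    rw [pow_succ, dirD_mul, ih, dirD_X]
    simp only [map_mul, map_add, Nat.cast_add, Nat.cast_one, map_one]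
    ring

lemma dirD_range {D : ℕ} (c : Fin D → ℂ) (k : Fin D) (hk : c k ≠ 0) (n : ℕ) :
    ∀ f, (dirD c ^ n) f = 0 → ∀ m : ℕ, X k ^ m * f ∈ LinearMap.range (dirD c) := by
  induction n with
  | zero =>
    intro f hf m
    have : f = 0 := by simpa using hf
    simp [this]
  | succ n ih =>
    intro f hf m
    have h1 := ih (dirD c f) (by rwa [pow_succ, Module.End.mul_apply] at hf) (m + 1)
    have h2 : dirD c (X k ^ (m + 1) * f) ∈ LinearMap.range (dirD c) := ⟨_, rfl⟩
    have hne : ((m : ℂ) + 1) * c k ≠ 0 := mul_ne_zero (by exact_mod_cast m.succ_ne_zero) hk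
    rw [← Submodule.smul_mem_iff _ hne, smul_eq_C_mul]
    convert Submodule.sub_mem _ h2 h1 using 1
    rw [dirD_mul, dirD_X_pow]
    ring

/-- Surjectivity of the first differential `d₁ : P_μ ↦ −i p^ν ∂_ν P_μ` of the massless
(`p² = 0`, `p ≠ 0`) spectral sequence on transverse polynomial vector fields: for every
transverse polynomial vector field `Q` (`Σ_μ p^μ Q_μ = 0`) there is a transverse polynomial
vector field `P` with `Σ_ν p^ν ∂_ν P_μ = Q_μ` for all `μ`. -/
theorem massless_d1_surjective_on_transverse_fields (D : ℕ) (hD : 2 ≤ D)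
    (p : Fin D → ℝ) (hp : p ≠ 0)
    (hnull : (∑ μ, pUp p μ * p μ) = 0)
    (Q : Fin D → MvPolynomial (Fin D) ℂ)
    (hQ : (∑ μ, ((pUp p μ : ℝ) : ℂ) • Q μ) = 0) :
    ∃ P : Fin D → MvPolynomial (Fin D) ℂ,
      (∑ μ, ((pUp p μ : ℝ) : ℂ) • P μ) = 0 ∧
      ∀ μ, (∑ ν, ((pUp p ν : ℝ) : ℂ) • pd D ν (P μ)) = Q μ := by
  obtain ⟨k, hk⟩ := Function.ne_iff.mp hp
  set c : Fin D → ℂ := fun μ => ((pUp p μ : ℝ) : ℂ) with hc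
  have hck : c k ≠ 0 := by
    have : pUp p k ≠ 0 := by
      unfold pUp
      refine mul_ne_zero ?_ hk
      split_ifs <;> norm_num
    simpa [hc] using this
  have hsurj : LinearMap.range (dirD c) = ⊤ := by
    rw [eq_top_iff]
    intro f _
    obtain ⟨n, hn⟩ := dirD_nil c f
    simpa using dirD_range c k hck n f hn 0
  obtain ⟨S, hS⟩ := LinearMap.exists_rightInverse_of_surjective (dirD c) hsurj
  refine ⟨fun μ => S (Q μ), ?_, fun μ => ?_⟩
  · have := congrArg S hQ
    simpa only [map_sum, map_smul, map_zero] using this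
  · have := LinearMap.congr_fun hS (Q μ)
    rw [LinearMap.comp_apply, dirD_apply] at this
    exact this
end
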